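/- For every integer n ≥ 2 and every integer i with 3 ≤ i ≤ 2^n - 1, v₂(s(2^n, i+1)) ≥ v₂(s(2^n, i-1)) - 2n + 4, where s is the unsigned Stirling number of the first kind. -/

import Mathlib

/-!
Write `N = 2^(n+1)`. In `x(x+1)⋯(x+N-1)` the factors `x + j` and `x + (N - j)` multiply to
`y + j(N - j)` with `y = x(x + N)`, so the product equals `x(x + 2^n) · S_n(y)`, where
`S_n = pairPoly n` is monic of degree `2^n - 1` (`risingPoly_eq`).

The point is that the valuations of the coefficients of `S_n` can be computed exactly. Separating
even and odd `j` gives `S_(n+1)(y) = 4^(2^n - 1) S_n(y/4) · O_n(y)`, with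
`O_n = oddPoly n ≡ (y + 1)^(2^n)` modulo `2^(n+1)` (`pairPoly_succ`, `oddPoly_congr`). As
`v₂ (2^n choose w) = n - v₂(w) ≤ n` for `1 ≤ w ≤ 2^n`, the congruence gives the valuations of the
coefficients of `O_n`. In the convolution for each coefficient of `S_(n+1)` one term then has
strictly smallest valuation (`coeff_pairPoly`), whence the recursion `gval`, and from it the bound
`gval n t - gval n (t+1) ≤ 2n - 2` (`gval_step`).

This bound in turn shows that, when `y = x² + Nx` is substituted, the multiples of `N` do not
disturb the leading valuations: `v₂ s(N, 2m+2) = gval n m` and `v₂ s(N, 2m+1) = gval n m + n`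
(`padicValNat_sF_even`, `padicValNat_sF_odd`, the latter for `m ≥ 1`). The theorem is therefore
`gval_step`.
-/

open Polynomial Finset

/-- Unsigned Stirling number of the first kind: coefficient of `x^k` in
`x(x+1)⋯(x+n-1)`. -/
noncomputable def sF (n k : ℕ) : ℕ :=
  (∏ i ∈ Finset.range n, (X + C i : Polynomial ℕ)).coeff k

/-- The `m`-th Stirling number of the first kind: coefficient of `x^k` in
`(x+m)(x+m+1)⋯(x+m+n-1)`. -/
noncomputable def sM (m n k : ℕ) : ℕ :=
  (∏ i ∈ Finset.range n, (X + C (m + i) : Polynomial ℕ)).coeff k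

/-- `H n k`: the `k`-th elementary symmetric function of `1, 1/2, …, 1/n`. -/
def Hfun (n k : ℕ) : ℚ :=
  ((Finset.Icc 1 n).val.map (fun i => (1 : ℚ) / i)).esymm k

/-! ### Integers of given 2-adic valuation -/

/-- `ExVal k a` says that the integer `a` has 2-adic valuation exactly `k` (so `a ≠ 0`). -/
def ExVal (k : ℕ) (a : ℤ) : Prop := ∃ b : ℤ, a = 2 ^ k * (2 * b + 1)

lemma ExVal.mul {k l : ℕ} {a b : ℤ} (ha : ExVal k a) (hb : ExVal l b) : ExVal (k + l) (a * b) := by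
  obtain ⟨x, rfl⟩ := ha
  obtain ⟨y, rfl⟩ := hb
  exact ⟨2 * x * y + x + y, by ring⟩

lemma ExVal.add {k : ℕ} {a b : ℤ} (ha : ExVal k a) (hb : 2 ^ (k + 1) ∣ b) : ExVal k (a + b) := by
  obtain ⟨x, rfl⟩ := ha
  obtain ⟨y, rfl⟩ := hb
  exact ⟨x + y, by ring⟩

lemma ExVal.dvd {k j : ℕ} {a : ℤ} (ha : ExVal k a) (h : j ≤ k) : (2 : ℤ) ^ j ∣ a := by
  obtain ⟨x, rfl⟩ := ha
  exact Dvd.dvd.mul_right (pow_dvd_pow 2 h) _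

lemma exVal_pow (k : ℕ) : ExVal k (2 ^ k) := ⟨0, by ring⟩

/-- A term of strictly smallest valuation determines the valuation of a sum. -/
lemma ExVal.sum {ι : Type*} [DecidableEq ι] {s : Finset ι} {f : ι → ℤ} {k : ℕ} {x : ι}
    (hx : x ∈ s) (h : ExVal k (f x)) (hr : ∀ y ∈ s, y ≠ x → 2 ^ (k + 1) ∣ f y) :
    ExVal k (∑ y ∈ s, f y) := by
  rw [← Finset.add_sum_erase s f hx]
  refine h.add (Finset.dvd_sum fun y hy => ?_)
  exact hr y (Finset.mem_of_mem_erase hy) (Finset.ne_of_mem_erase hy)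

lemma ExVal.padicValNat_eq {k a : ℕ} (h : ExVal k (a : ℤ)) : padicValNat 2 a = k := by
  have h0 : a ≠ 0 := by
    rintro rfl
    obtain ⟨b, hb⟩ := h
    have : (2 : ℤ) * b + 1 = 0 := by
      rcases mul_eq_zero.mp hb.symm with h | h
      · exact absurd h (by positivity)
      · exact h
    omega
  apply le_antisymm
  · by_contra hlt
    have h1 : 2 ^ (k + 1) ∣ a := (padicValNat_dvd_iff_le h0).mpr (by omega)
    have h2 : (2 : ℤ) ^ (k + 1) ∣ a := by exact_mod_cast h1
    obtain ⟨b, hb⟩ := h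
    rw [hb, pow_succ] at h2
    have := (mul_dvd_mul_iff_left (by positivity : (2 : ℤ) ^ k ≠ 0)).mp h2
    omega
  · rw [← padicValNat_dvd_iff_le h0]
    exact_mod_cast h.dvd le_rfl

lemma exVal_padicValNat {a : ℕ} (h0 : a ≠ 0) : ExVal (padicValNat 2 a) (a : ℤ) := by
  obtain ⟨b, hb⟩ : 2 ^ padicValNat 2 a ∣ a := pow_padicValNat_dvd
  have hodd : ¬ 2 ∣ b := by
    rintro ⟨c, rfl⟩
    have : 2 ^ (padicValNat 2 a + 1) ∣ a := ⟨c, by rw [pow_succ, mul_assoc]; exact hb⟩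
    rw [padicValNat_dvd_iff_le h0] at this
    omega
  refine ⟨(b / 2 : ℕ), ?_⟩
  have h2 : b = 2 * (b / 2) + 1 := by omega
  have h3 : a = 2 ^ padicValNat 2 a * (2 * (b / 2) + 1) := by rw [← h2]; exact hb
  exact_mod_cast h3

lemma padicValNat_le_of_le_two_pow {n w : ℕ} (h0 : w ≠ 0) (h : w ≤ 2 ^ n) :
    padicValNat 2 w ≤ n := by
  have h1 := Nat.le_of_dvd (Nat.pos_of_ne_zero h0) (pow_padicValNat_dvd (p := 2) (n := w))
  exact (Nat.pow_le_pow_iff_right (by norm_num)).mp (h1.trans h)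

lemma padicValNat_lt_self' {w : ℕ} (h0 : w ≠ 0) : padicValNat 2 w < w := by
  have h1 := Nat.le_of_dvd (Nat.pos_of_ne_zero h0) (pow_padicValNat_dvd (p := 2) (n := w))
  exact lt_of_lt_of_le Nat.lt_two_pow_self h1

lemma padicValNat_choose_two_pow {n w : ℕ} (h0 : w ≠ 0) (h : w ≤ 2 ^ n) :
    padicValNat 2 ((2 ^ n).choose w) = n - padicValNat 2 w := by
  have h1 := Nat.Prime.emultiplicity_choose_prime_pow_add_emultiplicity Nat.prime_two h h0
  have hc : (2 ^ n).choose w ≠ 0 := (Nat.choose_pos h).ne'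
  rw [← padicValNat_eq_emultiplicity hc, ← padicValNat_eq_emultiplicity h0] at h1
  have h2 : padicValNat 2 ((2 ^ n).choose w) + padicValNat 2 w = n := by exact_mod_cast h1
  omega

/-! ### The polynomials in `y = x(x + 2^(n+1))` -/

/-- `oddPoly n = ∏ (y + j(2^(n+2) - j))` over the odd `j < 2^(n+1)`. -/
noncomputable def oddPoly (n : ℕ) : ℤ[X] :=
  ∏ i ∈ range (2 ^ n), (X + C ((2 * i + 1) * (2 ^ (n + 2) - (2 * i + 1)) : ℤ))

/-- `pairPoly n = ∏ (y + j(2^(n+1) - j))` over `1 ≤ j < 2^n`. With `y = x(x + 2^(n+1))` the factor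
of index `j` is `(x + j)(x + 2^(n+1) - j)`. -/
noncomputable def pairPoly (n : ℕ) : ℤ[X] :=
  ∏ i ∈ range (2 ^ n - 1), (X + C ((i + 1) * (2 ^ (n + 1) - (i + 1)) : ℤ))

lemma dvd_prod_sub_prod {R ι : Type*} [CommRing R] (s : Finset ι) (a : R) (f g : ι → R)
    (h : ∀ i ∈ s, a ∣ f i - g i) : a ∣ ∏ i ∈ s, f i - ∏ i ∈ s, g i := by
  classical
  induction s using Finset.induction_on with
  | empty => simp
  | insert i s hi ih =>
    rw [prod_insert hi, prod_insert hi]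
    have h1 := h i (mem_insert_self i s)
    have h2 := ih fun j hj => h j (mem_insert_of_mem hj)
    have : f i * ∏ i ∈ s, f i - g i * ∏ i ∈ s, g i =
        (f i - g i) * ∏ i ∈ s, f i + g i * (∏ i ∈ s, f i - ∏ i ∈ s, g i) := by ring
    rw [this]
    exact dvd_add (h1.mul_right _) (h2.mul_left _)

/-- The factor of odd index `j` has constant term `-j²` modulo `2^(n+2)`, and the indices `j` and
`2^(n+1) + j` have the same square modulo `2^(n+2)`. -/
lemma oddPoly_succ_congr (n : ℕ) : C ((2 : ℤ) ^ (n + 2)) ∣ oddPoly (n + 1) - oddPoly n ^ 2 := by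
  have hsplit : oddPoly (n + 1) =
      (∏ i ∈ range (2 ^ n), (X + C ((2 * i + 1) * (2 ^ (n + 3) - (2 * i + 1)) : ℤ))) *
      ∏ i ∈ range (2 ^ n), (X + C ((2 * (2 ^ n + i : ℕ) + 1) *
        (2 ^ (n + 3) - (2 * (2 ^ n + i : ℕ) + 1)) : ℤ)) := by
    rw [oddPoly, show 2 ^ (n + 1) = 2 ^ n + 2 ^ n by ring, prod_range_add]
  rw [hsplit, oddPoly, sq, ← prod_mul_distrib, ← prod_mul_distrib]
  refine dvd_prod_sub_prod _ _ _ _ fun i _ => ?_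
  have h1 : C ((2 : ℤ) ^ (n + 2)) ∣
      (X + C ((2 * i + 1) * (2 ^ (n + 3) - (2 * i + 1)) : ℤ)) -
      (X + C ((2 * i + 1) * (2 ^ (n + 2) - (2 * i + 1)) : ℤ)) := by
    rw [add_sub_add_left_eq_sub, ← C_sub]
    exact map_dvd C ⟨2 * i + 1, by ring⟩
  have h2 : C ((2 : ℤ) ^ (n + 2)) ∣
      (X + C ((2 * (2 ^ n + i : ℕ) + 1) * (2 ^ (n + 3) - (2 * (2 ^ n + i : ℕ) + 1)) : ℤ)) -
      (X + C ((2 * i + 1) * (2 ^ (n + 2) - (2 * i + 1)) : ℤ)) := by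
    rw [add_sub_add_left_eq_sub, ← C_sub]
    exact map_dvd C ⟨3 * 2 ^ n, by push_cast; ring⟩
  generalize (X + C ((2 * i + 1) * (2 ^ (n + 3) - (2 * i + 1)) : ℤ)) = A at *
  generalize (X + C ((2 * (2 ^ n + i : ℕ) + 1) *
    (2 ^ (n + 3) - (2 * (2 ^ n + i : ℕ) + 1)) : ℤ)) = B at *
  generalize (X + C ((2 * i + 1) * (2 ^ (n + 2) - (2 * i + 1)) : ℤ)) = D at *
  rw [show A * B - D * D = (A - D) * B + D * (B - D) by ring]
  exact dvd_add (h1.mul_right _) (h2.mul_left _)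

/-- Squaring a congruence modulo `2^(n+1)` gives one modulo `2^(n+2)`, which is what lets the
congruence of `oddPoly_succ_congr` propagate. -/
lemma oddPoly_congr (n : ℕ) : C ((2 : ℤ) ^ (n + 1)) ∣ oddPoly n - (X + 1) ^ (2 ^ n) := by
  induction n with
  | zero => exact ⟨1, by simp [oddPoly]; norm_num [← C_1, ← C_ofNat, ← C_sub]⟩
  | succ n ih =>
    obtain ⟨q, hq⟩ := oddPoly_succ_congr n
    obtain ⟨r, hr⟩ := ih
    refine ⟨q + (X + 1) ^ (2 ^ n) * r + C (2 ^ n) * r ^ 2, ?_⟩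
    have e1 : oddPoly (n + 1) = oddPoly n ^ 2 + C (2 ^ (n + 2)) * q := by rw [← hq]; ring
    have e2 : oddPoly n = (X + 1) ^ (2 ^ n) + C (2 ^ (n + 1)) * r := by rw [← hr]; ring
    have c2 : (C 2 : ℤ[X]) = 2 := rfl
    rw [e1, e2]
    simp only [C_pow, c2]
    ring

lemma coeff_oddPoly_congr (n w : ℕ) :
    (2 : ℤ) ^ (n + 1) ∣ (oddPoly n).coeff w - ((2 ^ n).choose w : ℕ) := by
  have h := (C_dvd_iff_dvd_coeff _ _).mp (oddPoly_congr n) w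
  rwa [coeff_sub, coeff_X_add_one_pow] at h

lemma coeff_oddPoly_zero (n : ℕ) : ExVal 0 ((oddPoly n).coeff 0) := by
  have h := coeff_oddPoly_congr n 0
  have h2 : (2 : ℤ) ^ (0 + 1) ∣ (oddPoly n).coeff 0 - ((2 ^ n).choose 0 : ℕ) :=
    (pow_dvd_pow 2 (by omega)).trans h
  have h3 : ExVal 0 (((2 ^ n).choose 0 : ℕ) : ℤ) := ⟨0, by simp⟩
  simpa using h3.add h2

/-- The valuation of `(2^n).choose w` is at most `n`, so it is seen by the congruence modulo
`2^(n+1)`. -/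
lemma coeff_oddPoly {n w : ℕ} (h0 : w ≠ 0) (h : w ≤ 2 ^ n) :
    ExVal (n - padicValNat 2 w) ((oddPoly n).coeff w) := by
  have h1 := coeff_oddPoly_congr n w
  have h3 := exVal_padicValNat (Nat.choose_pos h).ne'
  rw [padicValNat_choose_two_pow h0 h] at h3
  simpa using h3.add ((pow_dvd_pow 2 (by omega)).trans h1)

lemma monic_oddPoly (n : ℕ) : (oddPoly n).Monic := monic_prod_of_monic _ _ fun _ _ => monic_X_add_C _

lemma monic_pairPoly (n : ℕ) : (pairPoly n).Monic :=
  monic_prod_of_monic _ _ fun _ _ => monic_X_add_C _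

lemma natDegree_oddPoly (n : ℕ) : (oddPoly n).natDegree = 2 ^ n := by
  rw [oddPoly, natDegree_prod_of_monic _ _ fun _ _ => monic_X_add_C _]
  simp only [natDegree_X_add_C, sum_const, card_range, smul_eq_mul, mul_one]

lemma natDegree_pairPoly (n : ℕ) : (pairPoly n).natDegree = 2 ^ n - 1 := by
  rw [pairPoly, natDegree_prod_of_monic _ _ fun _ _ => monic_X_add_C _]
  simp only [natDegree_X_add_C, sum_const, card_range, smul_eq_mul, mul_one]

lemma prod_range_odd_split {R : Type*} [CommMonoid R] (f : ℕ → R) (M : ℕ) :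
    ∏ i ∈ range (2 * M + 1), f i =
      (∏ k ∈ range (M + 1), f (2 * k)) * ∏ k ∈ range M, f (2 * k + 1) := by
  induction M with
  | zero => simp
  | succ M ih =>
    rw [show 2 * (M + 1) + 1 = 2 * M + 1 + 1 + 1 by ring, prod_range_succ, prod_range_succ, ih,
      prod_range_succ _ (M + 1), prod_range_succ (fun k => f (2 * k + 1)) M,
      show 2 * (M + 1) = 2 * M + 2 by ring]
    ac_rfl

lemma scaleRoots_prod_X_add_C (M : ℕ) (a : ℤ) (f : ℕ → ℤ) :
    (∏ i ∈ range M, (X + C (f i))).scaleRoots a = ∏ i ∈ range M, (X + C (a * f i)) := by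
  induction M with
  | zero => simp [one_scaleRoots]
  | succ M ih =>
    rw [prod_range_succ, prod_range_succ, mul_scaleRoots_of_noZeroDivisors, ih,
      X_add_C_scaleRoots, mul_comm a]

/-- Odd and even indices `j` of `pairPoly (n + 1)` are separated; `j = 2k` contributes
`4 k (2^(n+1) - k)`. -/
lemma pairPoly_succ (n : ℕ) : pairPoly (n + 1) = (pairPoly n).scaleRoots 4 * oddPoly n := by
  obtain ⟨M, hM⟩ : ∃ M, 2 ^ n = M + 1 := ⟨2 ^ n - 1, by have := Nat.one_le_two_pow (n := n); omega⟩
  rw [pairPoly, pairPoly, oddPoly, show 2 ^ (n + 1) - 1 = 2 * M + 1 by rw [pow_succ]; omega,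
    prod_range_odd_split, scaleRoots_prod_X_add_C, hM, Nat.add_sub_cancel, mul_comm]
  congr 1
  refine prod_congr rfl fun i _ => ?_
  congr 2; push_cast; ring

/-! ### The valuations of the coefficients of `pairPoly` -/

/-- The 2-adic valuation of the coefficient of `y^t` in `pairPoly n`, for `t < 2^n`
(see `coeff_pairPoly`). -/
def gval : ℕ → ℕ → ℕ
  | 0, _ => 0
  | n + 1, t => if t < 2 ^ n then gval n t + 2 * (2 ^ n - 1 - t)
      else n - padicValNat 2 (t + 1 - 2 ^ n)

lemma gval_lo {n t : ℕ} (h : t < 2 ^ n) : gval (n + 1) t = gval n t + 2 * (2 ^ n - 1 - t) := by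
  rw [gval, if_pos h]

lemma gval_hi {n t : ℕ} (h : 2 ^ n ≤ t) : gval (n + 1) t = n - padicValNat 2 (t + 1 - 2 ^ n) := by
  rw [gval, if_neg (by omega)]

lemma gval_top (n : ℕ) : gval n (2 ^ n - 1) = 0 := by
  cases n with
  | zero => rfl
  | succ n =>
    have := Nat.one_le_two_pow (n := n)
    rw [gval_hi (by rw [pow_succ]; omega),
      show 2 ^ (n + 1) - 1 + 1 - 2 ^ n = 2 ^ n by rw [pow_succ]; omega, padicValNat.prime_pow]
    omega

lemma gval_rise {n a b : ℕ} (hab : a < b) (hb : b < 2 ^ n) : gval n b + 1 ≤ gval n a + n := by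
  induction n with
  | zero => simp at hb; omega
  | succ n ih =>
    rcases lt_trichotomy (b + 1) (2 ^ n) with h | h | h
    · have := ih (by omega)
      rw [gval_lo (by omega), gval_lo (by omega)]
      omega
    · have := gval_top n
      rw [gval_lo (by omega : b < 2 ^ n), show b = 2 ^ n - 1 by omega, this]
      omega
    · rw [gval_hi (by omega : 2 ^ n ≤ b)]
      omega

/-- The bound of the theorem, in terms of `gval`. -/
lemma gval_step {n t : ℕ} (h : t + 1 < 2 ^ n) : gval n t + 2 ≤ gval n (t + 1) + 2 * n := by
  induction n with
  | zero => simp at h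
  | succ n ih =>
    rcases lt_trichotomy (t + 1) (2 ^ n) with h' | h' | h'
    · have := ih h'
      rw [gval_lo (by omega), gval_lo (by omega)]
      omega
    · have := gval_top n
      rw [gval_lo (by omega : t < 2 ^ n), show t = 2 ^ n - 1 by omega, this]
      omega
    · rw [gval_hi (by omega : 2 ^ n ≤ t)]
      omega

lemma gval_steps {n t : ℕ} (r : ℕ) (h : t + r < 2 ^ n) :
    gval n t + 2 * r ≤ gval n (t + r) + 2 * n * r := by
  induction r with
  | zero => simp
  | succ r ih =>
    have h1 := ih (by omega)
    have h2 := gval_step (n := n) (t := t + r) (by omega)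
    rw [← add_assoc]
    nlinarith

/-- A lower bound at distance `r` from the top degree: the valuation is at least
`n - 1 - v₂(r)`, which for `r ≤ 2^(n-1)` is the valuation of `(2^(n-1)).choose r`. -/
lemma gval_lower {n r : ℕ} (h0 : r ≠ 0) (h : r < 2 ^ n) :
    n ≤ gval n (2 ^ n - 1 - r) + padicValNat 2 r + 1 := by
  induction n generalizing r with
  | zero => simp
  | succ n ih =>
    have hp := Nat.one_le_two_pow (n := n)
    have hs : 2 ^ (n + 1) = 2 ^ n + 2 ^ n := by ring
    rcases lt_trichotomy r (2 ^ n) with h' | h' | h'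
    · rw [gval_hi (by omega), show 2 ^ (n + 1) - 1 - r + 1 - 2 ^ n = 2 ^ n - r by omega]
      have h1 := padicValNat_le_of_le_two_pow (n := n) (w := 2 ^ n - r) (by omega) (by omega)
      have h2 : padicValNat 2 (2 ^ n - r) ≤ padicValNat 2 r := by
        rw [← padicValNat_dvd_iff_le h0]
        have := Nat.dvd_sub (pow_dvd_pow 2 h1)
          (pow_padicValNat_dvd (p := 2) (n := 2 ^ n - r))
        rwa [Nat.sub_sub_self h'.le] at this
      omega
    · rw [h', padicValNat.prime_pow]
      omega
    · obtain ⟨s, rfl⟩ := Nat.exists_eq_add_of_lt h'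
      have h1 := padicValNat_le_of_le_two_pow (n := n) (w := s + 1) (by omega) (by omega)
      have h2 : padicValNat 2 (s + 1) ≤ padicValNat 2 (2 ^ n + s + 1) := by
        rw [← padicValNat_dvd_iff_le h0, add_assoc]
        exact dvd_add (pow_dvd_pow 2 h1) pow_padicValNat_dvd
      have h3 := ih (r := s + 1) (by omega) (by omega)
      rw [gval_lo (by omega), show 2 ^ (n + 1) - 1 - (2 ^ n + s + 1) = 2 ^ n - 1 - (s + 1) by omega]
      omega

/-- In each coefficient of `pairPoly (n + 1) = (pairPoly n).scaleRoots 4 * oddPoly n` one term of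
the convolution has strictly smallest valuation: the one with the constant term of `oddPoly n` when
`t < 2^n`, the one with the leading coefficient of `pairPoly n` otherwise. -/
lemma coeff_pairPoly {n t : ℕ} (h : t < 2 ^ n) : ExVal (gval n t) ((pairPoly n).coeff t) := by
  induction n generalizing t with
  | zero =>
    obtain rfl : t = 0 := by simpa using h
    exact ⟨0, by simp [pairPoly, gval]⟩
  | succ n ih =>
    have hp := Nat.one_le_two_pow (n := n)
    have hs : 2 ^ (n + 1) = 2 ^ n + 2 ^ n := by ring
    have hc : ∀ u, u < 2 ^ n →
        ExVal (gval n u + 2 * (2 ^ n - 1 - u)) (((pairPoly n).scaleRoots 4).coeff u) := by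
      intro u hu
      rw [coeff_scaleRoots, natDegree_pairPoly]
      refine (ih hu).mul ?_
      rw [show (4 : ℤ) = 2 ^ 2 by norm_num, ← pow_mul]
      exact exVal_pow _
    rw [pairPoly_succ, coeff_mul]
    by_cases ht : t < 2 ^ n
    · rw [gval_lo ht]
      refine ExVal.sum (x := (t, 0)) (by simp) ((hc t ht).mul (coeff_oddPoly_zero n)) ?_
      rintro ⟨u, w⟩ huw hne
      rw [Finset.HasAntidiagonal.mem_antidiagonal] at huw
      dsimp only at huw ⊢
      have hw : w ≠ 0 := by rintro rfl; exact hne (by simp at huw; simp [huw])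
      have hT := (hc u (by omega)).mul (coeff_oddPoly (n := n) hw (by omega))
      refine hT.dvd ?_
      have h1 := gval_rise (n := n) (a := u) (b := t) (by omega) ht
      have h2 := padicValNat_lt_self' hw
      have h3 := padicValNat_le_of_le_two_pow (n := n) hw (by omega)
      omega
    · obtain ⟨w, rfl⟩ : ∃ w, t = 2 ^ n - 1 + w := ⟨t - (2 ^ n - 1), by omega⟩
      have hw : w ≠ 0 := by omega
      rw [gval_hi (by omega), show 2 ^ n - 1 + w + 1 - 2 ^ n = w by omega]
      refine ExVal.sum (x := (2 ^ n - 1, w)) (by simp) ?_ ?_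
      · have := (hc (2 ^ n - 1) (by omega)).mul (coeff_oddPoly (n := n) hw (by omega))
        simpa [gval_top] using this
      · rintro ⟨u, q⟩ huq hne
        rw [Finset.HasAntidiagonal.mem_antidiagonal] at huq
        dsimp only at huq ⊢
        by_cases hu : u < 2 ^ n
        · obtain ⟨r, hr⟩ : ∃ r, u + r = 2 ^ n - 1 := ⟨2 ^ n - 1 - u, by omega⟩
          obtain rfl : q = w + r := by omega
          have hr0 : r ≠ 0 := by
            rintro rfl
            exact hne (by simp at hr; simp [hr])
          by_cases hq : w + r ≤ 2 ^ n
          · have hT := (hc u hu).mul (coeff_oddPoly (n := n) (by omega) hq)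
            refine hT.dvd ?_
            have h1 := gval_lower (n := n) hr0 (by omega)
            rw [show 2 ^ n - 1 - r = u by omega] at h1
            rw [show 2 ^ n - 1 - u = r by omega]
            have h2 := padicValNat_le_of_le_two_pow (n := n) (w := w + r) (by omega) hq
            have h3 := padicValNat_le_of_le_two_pow (n := n) (w := w) (by omega) (by omega)
            by_cases hv : padicValNat 2 (w + r) ≤ padicValNat 2 w
            · omega
            · -- if adding `r` to `w` raises the valuation, then `r` and `w` have the same one
              have h4 : padicValNat 2 r ≤ padicValNat 2 w := by
                by_contra hlt
                have d1 : 2 ^ (padicValNat 2 w + 1) ∣ r :=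
                  (padicValNat_dvd_iff_le hr0).mpr (by omega)
                have d2 : 2 ^ (padicValNat 2 w + 1) ∣ w + r :=
                  (padicValNat_dvd_iff_le (by omega)).mpr (by omega)
                have d3 := (Nat.dvd_add_left d1).mp d2
                rw [padicValNat_dvd_iff_le hw] at d3
                omega
              omega
          · rw [coeff_eq_zero_of_natDegree_lt (p := oddPoly n) (by rw [natDegree_oddPoly]; omega)]
            simp
        · rw [coeff_eq_zero_of_natDegree_lt (p := (pairPoly n).scaleRoots 4)
            (by rw [natDegree_scaleRoots, natDegree_pairPoly]; omega)]
          simp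

/-! ### From `pairPoly` to the Stirling numbers -/

lemma coeff_comp_pairPoly (n k : ℕ) (N : ℤ) :
    ((pairPoly n).comp (X * (X + C N))).coeff k =
      ∑ t ∈ range (2 ^ n), (pairPoly n).coeff t *
        if t ≤ k then N ^ (t - (k - t)) * (t.choose (k - t) : ℤ) else 0 := by
  have hp := Nat.one_le_two_pow (n := n)
  rw [comp, eval₂_eq_sum_range, finsetSum_coeff, natDegree_pairPoly, Nat.sub_add_cancel hp]
  refine sum_congr rfl fun t _ => ?_
  rw [coeff_C_mul, mul_pow, coeff_X_pow_mul', coeff_X_add_C_pow]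

/-- The term `y^m` contributes with valuation `gval n m`; the terms `y^(m+r)` with `r > 0` carry a
factor `2^(2r(n+1))`, which by `gval_steps` more than makes up for their smaller `gval`. -/
lemma coeff_comp_even {n m : ℕ} (h : m < 2 ^ n) :
    ExVal (gval n m) (((pairPoly n).comp (X * (X + C (2 ^ (n + 1))))).coeff (2 * m)) := by
  rw [coeff_comp_pairPoly]
  refine ExVal.sum (x := m) (by simpa using h) ?_ ?_
  · rw [if_pos (by omega), show 2 * m - m = m by omega]
    simpa using coeff_pairPoly h
  · intro t ht hne
    rw [mem_range] at ht
    split_ifs with htk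
    · rcases lt_or_gt_of_ne hne with hlt | hgt
      · rw [Nat.choose_eq_zero_of_lt (by omega)]
        simp
      · obtain ⟨r, rfl⟩ := Nat.exists_eq_add_of_lt hgt
        rw [← mul_assoc]
        refine Dvd.dvd.mul_right ?_ _
        have e : m + r + 1 - (2 * m - (m + r + 1)) = 2 * (r + 1) := by omega
        rw [e, ← pow_mul]
        refine ((coeff_pairPoly ht).mul (exVal_pow _)).dvd ?_
        have := gval_steps (n := n) (t := m) (r + 1) (by omega)
        rw [← add_assoc] at this
        nlinarith
    · simp

lemma coeff_comp_odd (n m : ℕ) :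
    (2 : ℤ) ^ (gval n (m + 1) + (n + 1)) ∣
      ((pairPoly n).comp (X * (X + C (2 ^ (n + 1))))).coeff (2 * m + 1) := by
  rw [coeff_comp_pairPoly]
  refine dvd_sum fun t ht => ?_
  rw [mem_range] at ht
  split_ifs with htk
  · rcases lt_or_ge t (m + 1) with hlt | hgt
    · rw [Nat.choose_eq_zero_of_lt (by omega)]
      simp
    · obtain ⟨r, rfl⟩ := Nat.exists_eq_add_of_le hgt
      rw [← mul_assoc]
      refine Dvd.dvd.mul_right ?_ _
      have e : m + 1 + r - (2 * m + 1 - (m + 1 + r)) = 2 * r + 1 := by omega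
      rw [e, ← pow_mul]
      refine ((coeff_pairPoly ht).mul (exVal_pow _)).dvd ?_
      have := gval_steps (n := n) (t := m + 1) r (by omega)
      nlinarith
  · simp

lemma coeff_comp_odd_top (n : ℕ) :
    ((pairPoly n).comp (X * (X + C (2 ^ (n + 1))))).coeff (2 * (2 ^ n - 1) + 1) = 0 := by
  rw [coeff_comp_pairPoly]
  refine sum_eq_zero fun t ht => ?_
  rw [mem_range] at ht
  rw [Nat.choose_eq_zero_of_lt (by omega)]
  simp

/-- Pair `x + j` with `x + (2^(n+1) - j)`; the factors left over are `x` and `x + 2^n`. -/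
lemma risingPoly_eq (n : ℕ) :
    (∏ i ∈ range (2 ^ (n + 1)), (X + C (i : ℤ))) =
      (pairPoly n).comp (X * (X + C (2 ^ (n + 1)))) * (X * (X + C (2 ^ n))) := by
  obtain ⟨M, hM⟩ : ∃ M, 2 ^ n = M + 1 := ⟨2 ^ n - 1, by have := Nat.one_le_two_pow (n := n); omega⟩
  have hMZ : (2 : ℤ) ^ n = M + 1 := by exact_mod_cast hM
  rw [pairPoly, Polynomial.prod_comp, hM, Nat.add_sub_cancel,
    show 2 ^ (n + 1) = M + 1 + (1 + M) by rw [pow_succ]; omega,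
    prod_range_add, add_comm 1 M, prod_range_succ' _ M, prod_range_succ' _ M,
    ← prod_range_reflect (fun i => X + C ((M + 1 + (i + 1) : ℕ) : ℤ)) M]
  have : ∏ i ∈ range M, (X + C ((i + 1) * (2 ^ (n + 1) - (i + 1)) : ℤ)).comp
        (X * (X + C (2 ^ (n + 1)))) =
      (∏ i ∈ range M, (X + C ((i + 1 : ℕ) : ℤ))) *
        ∏ i ∈ range M, (X + C ((M + 1 + (M - 1 - i + 1) : ℕ) : ℤ)) := by
    rw [← prod_mul_distrib]
    refine prod_congr rfl fun i hi => ?_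
    rw [mem_range] at hi
    have e : ((M + 1 + (M - 1 - i + 1) : ℕ) : ℤ) = 2 ^ (n + 1) - (i + 1) := by
      rw [pow_succ, hMZ]; omega
    rw [e]
    rw [add_comp, X_comp, C_comp]
    simp only [C_mul, C_sub, C_add, Nat.cast_add, Nat.cast_one]
    ring
  rw [this, hMZ]
  simp only [Nat.cast_zero, C_0, add_zero, Nat.cast_add, Nat.cast_one]
  ring

lemma sF_cast (n k : ℕ) :
    (sF n k : ℤ) = (∏ i ∈ range n, (X + C (i : ℤ))).coeff k := by
  have : (∏ i ∈ range n, (X + C (i : ℤ))) =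
      (∏ i ∈ range n, (X + C i : ℕ[X])).map (Nat.castRingHom ℤ) := by
    rw [Polynomial.map_prod]
    refine prod_congr rfl fun i _ => ?_
    simp
  rw [this, coeff_map, sF]
  rfl

lemma sF_split (n k : ℕ) : (sF (2 ^ (n + 1)) (k + 2) : ℤ) =
    ((pairPoly n).comp (X * (X + C (2 ^ (n + 1))))).coeff k +
      2 ^ n * ((pairPoly n).comp (X * (X + C (2 ^ (n + 1))))).coeff (k + 1) := by
  rw [sF_cast, risingPoly_eq]
  generalize (pairPoly n).comp (X * (X + C (2 ^ (n + 1)))) = T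
  rw [show T * (X * (X + C (2 ^ n))) = T * X * X + C (2 ^ n) * (T * X) by ring, coeff_add,
    coeff_mul_X, coeff_mul_X, coeff_C_mul, coeff_mul_X]

lemma padicValNat_sF_even {n m : ℕ} (h : m < 2 ^ n) :
    padicValNat 2 (sF (2 ^ (n + 1)) (2 * m + 2)) = gval n m := by
  apply ExVal.padicValNat_eq
  rw [sF_split]
  refine (coeff_comp_even h).add ?_
  by_cases h' : m + 1 < 2 ^ n
  · have h1 := mul_dvd_mul_left ((2 : ℤ) ^ n) (coeff_comp_odd n m)
    rw [← pow_add] at h1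
    refine (pow_dvd_pow 2 ?_).trans h1
    have := gval_step h'
    omega
  · obtain rfl : m = 2 ^ n - 1 := by omega
    rw [coeff_comp_odd_top]
    simp

lemma padicValNat_sF_odd {n m : ℕ} (h : m + 1 < 2 ^ n) :
    padicValNat 2 (sF (2 ^ (n + 1)) (2 * m + 3)) = gval n (m + 1) + n := by
  apply ExVal.padicValNat_eq
  rw [show 2 * m + 3 = 2 * m + 1 + 2 by ring, sF_split, add_comm (gval n (m + 1)),
    add_comm (coeff _ _)]
  refine ((exVal_pow n).mul (coeff_comp_even h)).add ?_
  refine (pow_dvd_pow 2 ?_).trans (coeff_comp_odd n m)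
  omega

theorem stmt11 (n i : ℕ) (hn : 2 ≤ n) (hi : 3 ≤ i) (hi' : i ≤ 2 ^ n - 1) :
    (padicValNat 2 (sF (2 ^ n) (i + 1)) : ℤ) ≥
      (padicValNat 2 (sF (2 ^ n) (i - 1)) : ℤ) - 2 * n + 4 := by
  obtain ⟨n, rfl⟩ : ∃ k, n = k + 1 := ⟨n - 1, by omega⟩
  have hs : 2 ^ (n + 1) = 2 * 2 ^ n := by ring
  -- `i + 1` and `i - 1` have the same parity: their valuations are consecutive values of `gval`,
  -- both increased by `n` in the case of even `i`.
  rcases Nat.even_or_odd' i with ⟨m, rfl | rfl⟩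
  · obtain ⟨m, rfl⟩ : ∃ k, m = k + 2 := ⟨m - 2, by omega⟩
    have h1 := padicValNat_sF_odd (n := n) (m := m) (by omega)
    have h2 := padicValNat_sF_odd (n := n) (m := m + 1) (by omega)
    have h3 := gval_step (n := n) (t := m + 1) (by omega)
    rw [show 2 * (m + 2) - 1 = 2 * m + 3 by omega,
      show 2 * (m + 2) + 1 = 2 * (m + 1) + 3 by omega, h1, h2]
    push_cast
    omega
  · obtain ⟨m, rfl⟩ : ∃ k, m = k + 1 := ⟨m - 1, by omega⟩
    have h1 := padicValNat_sF_even (n := n) (m := m) (by omega)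
    have h2 := padicValNat_sF_even (n := n) (m := m + 1) (by omega)
    have h3 := gval_step (n := n) (t := m) (by omega)
    rw [show 2 * (m + 1) + 1 - 1 = 2 * m + 2 by omega,
      show 2 * (m + 1) + 1 + 1 = 2 * (m + 1) + 2 by omega, h1, h2]
    push_cast
    omega
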